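/- arXiv:1606.06708 — 8 statements merged into one kernel-verified Lean document; each statement's English description precedes it below -/
import Mathlib

section
/- Let E be a real Banach space, and let A, B, C : ℤ → (E →L[ℝ] E) satisfy ‖A i‖, ‖B i‖, ‖C i‖ ≤ M for all i ∈ ℤ. Let H be the block-tridiagonal operator (H u) i = B (i−1) (u (i−1)) + A i (u i) + C i (u (i+1)) on ℓ∞(ℤ, E). Suppose G : ℤ → ℤ → (E →L[ℝ] E) satisfies ‖G i j‖ ≤ C₀ · exp(−λ·|i−j|) for some C₀ ≥ 0, λ > 0, together with the Green property: for all i, j ∈ ℤ, the operator B (i−1) ∘ G (i−1) j + A i ∘ G i j + C i ∘ G (i+1) j equals the identity on E if i = j and equals 0 if i ≠ j. Then for every w ∈ ℓ∞(ℤ, E) the sequence u defined by u i = ∑_{j∈ℤ} G i j (w j) belongs to ℓ∞(ℤ, E) and satisfies H u = w; in particular H : ℓ∞(ℤ, E) → ℓ∞(ℤ, E) is surjective. -/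
/-!
The kernel bound gives `‖G i j (w j)‖ ≤ C₀ ‖w‖ exp (-lam |i - j|)`. Its right-hand side is a
two-sided geometric series in `j`, summable by `summable_exp_neg_mul_abs_int`, and the
translation `j ↦ i - j` shows that its sum does not depend on `i`. Hence the series defining
`u i` converges absolutely and `u` is bounded. Continuous linear maps commute with the sum, so
`(H u) i` is the sum over `j` of the Green identity applied to `w j`, in which only the term
`j = i` survives, with value `w i`.
-/

open scoped ENNReal

theorem summable_exp_neg_mul_abs_int {lam : ℝ} (hlam : 0 < lam) :
    Summable fun k : ℤ => Real.exp (-lam * |(k : ℝ)|) := by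
  have h : Summable fun n : ℕ => Real.exp (-lam * (n : ℝ)) := by
    simpa [mul_comm] using Real.summable_exp_nat_mul_iff.mpr (neg_lt_zero.mpr hlam)
  apply Summable.of_nat_of_neg
  · simpa using h
  · simpa using h

/-- If `G` is an exponentially decaying Green kernel for the
block-tridiagonal operator `H` (with uniformly bounded coefficients), i.e.
`B (i−1) ∘ G (i−1) j + A i ∘ G i j + C i ∘ G (i+1) j = δ_{ij}·id`, then for every
`w ∈ ℓ∞(ℤ, E)` the sequence `u i = ∑_j G i j (w j)` lies in `ℓ∞(ℤ, E)` and solves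
`H u = w`; in particular `H` is surjective on `ℓ∞(ℤ, E)`. -/
theorem stmt2 {E : Type*} [NormedAddCommGroup E] [NormedSpace ℝ E] [CompleteSpace E]
    (A B C : ℤ → E →L[ℝ] E) (M : ℝ)
    (hA : ∀ i : ℤ, ‖A i‖ ≤ M) (hB : ∀ i : ℤ, ‖B i‖ ≤ M) (hC : ∀ i : ℤ, ‖C i‖ ≤ M)
    (G : ℤ → ℤ → E →L[ℝ] E) (C₀ lam : ℝ) (hC₀ : 0 ≤ C₀) (hlam : 0 < lam)
    (hG : ∀ i j : ℤ, ‖G i j‖ ≤ C₀ * Real.exp (-lam * |(i : ℝ) - (j : ℝ)|))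
    (hGreen : ∀ i j : ℤ,
      (B (i - 1)).comp (G (i - 1) j) + (A i).comp (G i j) + (C i).comp (G (i + 1) j)
        = if i = j then ContinuousLinearMap.id ℝ E else 0) :
    ∀ w : lp (fun _ : ℤ => E) ∞,
      (∀ i : ℤ, Summable fun j : ℤ => G i j (w j)) ∧
      ∃ u : lp (fun _ : ℤ => E) ∞,
        (∀ i : ℤ, u i = ∑' j : ℤ, G i j (w j)) ∧
        (∀ i : ℤ, B (i - 1) (u (i - 1)) + A i (u i) + C i (u (i + 1)) = w i) := by
  intro w
  have hexp := summable_exp_neg_mul_abs_int hlam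
  have hbound : ∀ i j : ℤ,
      ‖G i j (w j)‖ ≤ C₀ * ‖w‖ * Real.exp (-lam * |((i - j : ℤ) : ℝ)|) := by
    intro i j
    calc ‖G i j (w j)‖ ≤ ‖G i j‖ * ‖w j‖ := (G i j).le_opNorm _
      _ ≤ C₀ * Real.exp (-lam * |(i : ℝ) - (j : ℝ)|) * ‖w‖ := by
        gcongr
        · exact hG i j
        · exact lp.norm_apply_le_norm ENNReal.top_ne_zero w j
      _ = _ := by push_cast; ring
  have hdom : ∀ i : ℤ, HasSum
      (fun j : ℤ => C₀ * ‖w‖ * Real.exp (-lam * |((i - j : ℤ) : ℝ)|))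
      (C₀ * ‖w‖ * ∑' k : ℤ, Real.exp (-lam * |(k : ℝ)|)) := by
    intro i
    exact ((Equiv.subLeft i).hasSum_iff.mpr hexp.hasSum).mul_left _
  have hsum : ∀ i : ℤ, Summable fun j : ℤ => G i j (w j) := fun i =>
    Summable.of_norm_bounded (hdom i).summable (hbound i)
  refine ⟨hsum, ⟨fun i => ∑' j : ℤ, G i j (w j), ?_⟩, fun i => rfl, fun i => ?_⟩
  · refine memℓp_infty ⟨C₀ * ‖w‖ * ∑' k : ℤ, Real.exp (-lam * |(k : ℝ)|), ?_⟩
    rintro _ ⟨i, rfl⟩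
    exact tsum_of_norm_bounded (hdom i) (hbound i)
  · have hH := (((hsum (i - 1)).hasSum.mapL (B (i - 1))).add
      ((hsum i).hasSum.mapL (A i))).add ((hsum (i + 1)).hasSum.mapL (C i))
    refine hH.unique ?_
    have hterm : ∀ j : ℤ, B (i - 1) (G (i - 1) j (w j)) + A i (G i j (w j))
        + C i (G (i + 1) j (w j)) = if j = i then w i else 0 := by
      intro j
      have h := congrArg (fun T : E →L[ℝ] E => T (w j)) (hGreen i j)
      by_cases hij : j = i
      · subst hij
        simpa using h
      · simpa [hij, Ne.symm hij] using h
    simp only [hterm]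
    exact hasSum_ite_eq i (w i)
end

section
/- Let n ≥ 1, M > 0, and for each i ∈ ℤ let A i, B i, C i : ℝⁿ →L[ℝ] ℝⁿ satisfy ‖A i‖, ‖B i‖, ‖C i‖ ≤ M, with B i and C i invertible and ‖(B i)⁻¹‖, ‖(C i)⁻¹‖ ≤ M (twist condition). Let H be the block-tridiagonal operator on ℓ∞(ℤ, ℝⁿ) given by (H u) i = B (i−1) (u (i−1)) + A i (u i) + C i (u (i+1)). Suppose there are constants c > 0 and μ ∈ (0,1), and for each j ∈ ℤ subspaces E_j⁺, E_j⁻ ⊆ ℝⁿ × ℝⁿ, each of dimension n, with E_j⁺ ∩ E_j⁻ = {0}, such that: (i) for every j and every sequence u : ℤ → ℝⁿ satisfying the variational equation at every index i > j, if (u j, u (j+1)) ∈ E_j⁺ then (u i, u (i+1)) ∈ E_i⁺ and ‖(u i, u (i+1))‖ ≤ c·μ^{i−j}·‖(u j, u (j+1))‖ for all i > j; (ii) for every j and every sequence u satisfying the variational equation at every index i ≤ j, if (u j, u (j+1)) ∈ E_j⁻ then (u i, u (i+1)) ∈ E_i⁻ and ‖(u i, u (i+1))‖ ≤ c·μ^{j−i}·‖(u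 j, u (j+1))‖ for all i < j; (iii) every sequence u satisfying the variational equation at every index i > j and bounded on {i : i ≥ j} has (u j, u (j+1)) ∈ E_j⁺, and every sequence u satisfying the variational equation at every index i ≤ j and bounded on {i : i ≤ j+1} has (u j, u (j+1)) ∈ E_j⁻. Then H : ℓ∞(ℤ, ℝⁿ) → ℓ∞(ℤ, ℝⁿ) is a bijective bounded linear operator; consequently H has a bounded inverse, i.e., there exists K > 0 with ‖u‖∞ ≤ K·‖H u‖∞ for all u ∈ ℓ∞(ℤ, ℝⁿ). -/
/-!
Bounded solutions of `H u = f` are built from a Green's function. For a single index `j` and a vector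
`v`, put `z = (0, (C j)⁻¹ v)` and split `z = p + q` with `p ∈ E_j⁺`, `q ∈ E_j⁻` (possible by the
dimension count). Following the variational solution through `p` to the right of `j`, and minus the
one through `q` to the left of `j`, gives a sequence `w` with `H w = v` at `j`, `H w = 0` elsewhere
and `‖w i‖ ≤ K μ ^ |i - j| ‖v‖` (`exists_green`). Summing these over `j`, with `v = f j`, solves
`H u = f` in `ℓ∞`.

The constant `K` is independent of `j` only if the splitting `z = p + q` is uniformly bounded. This
is `splitting_bound`: over `m` steps forward an arbitrary solution grows at most by `(1 + 2 M²) ^ m`,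
while its stable part decays and its unstable part grows exponentially; taking `m` large bounds the
unstable part by the whole. The growth of the unstable part uses that it stays in `E⁻` forward in
time, which follows from (iii), since a solution that is bounded backward from one index is bounded
backward from every index.

Injectivity is immediate from (iii) and `E_j⁺ ∩ E_j⁻ = 0`, and the constant in the estimate of the
inverse comes from the open mapping theorem.
-/

open scoped ENNReal

section Helpers

variable {E : Type*} [NormedAddCommGroup E] [NormedSpace ℝ E]

/-- The block-tridiagonal expression `(H u) i`, for an arbitrary sequence `u`. -/
def hess (A B C : ℤ → E →L[ℝ] E) (u : ℤ → E) (i : ℤ) : E :=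
  B (i - 1) (u (i - 1)) + A i (u i) + C i (u (i + 1))

/-- A first-order recursion on `ℤ` whose steps have right inverses can be solved in both directions
from any index. -/
lemma exists_int_rec {α : Type*} (F G : ℤ → α → α) (hFG : ∀ i a, F i (G i a) = a) (j : ℤ) (a : α) :
    ∃ Z : ℤ → α, Z j = a ∧ ∀ i, Z (i + 1) = F i (Z i) := by
  let P : ℕ → α := fun k => Nat.rec a (fun k x => F (j + k) x) k
  let N : ℕ → α := fun k => Nat.rec a (fun k x => G (j - k - 1) x) k
  refine ⟨fun i => if j ≤ i then P (i - j).toNat else N (j - i).toNat, by simp [P], fun i => ?_⟩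
  rcases le_or_gt j i with h | h
  · obtain ⟨k, rfl⟩ := Int.le.dest h
    have h1 : (j + (k : ℤ) + 1 - j).toNat = k + 1 := by omega
    have h2 : (j + (k : ℤ) - j).toNat = k := by omega
    have h3 : j ≤ j + (k : ℤ) + 1 := by omega
    simp only [h1, h2, h3, h, if_true]
    rfl
  · obtain ⟨k, hk⟩ := Int.le.dest (Int.add_one_le_of_lt h)
    obtain rfl : i = j - k - 1 := by omega
    have h1 : (j - (j - (k : ℤ) - 1)).toNat = k + 1 := by omega
    have h2 : (if j ≤ j - (k : ℤ) - 1 + 1 then P (j - (k : ℤ) - 1 + 1 - j).toNat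
        else N (j - (j - (k : ℤ) - 1 + 1)).toNat) = N k := by
      rcases Nat.eq_zero_or_pos k with rfl | hk0
      · simp [P, N]
      · have h4 : (j - (j - (k : ℤ) - 1 + 1)).toNat = k := by omega
        rw [if_neg (by omega), h4]
    simp only [h2, not_le.mpr h, if_false, h1]
    exact (hFG _ _).symm

/-- Under the twist condition every pair of consecutive values extends to a solution of the
variational equation on all of `ℤ`. -/
lemma exists_solution (A B C : ℤ → E →L[ℝ] E) (B' C' : ℤ → E →L[ℝ] E)
    (hB : ∀ i x, B i (B' i x) = x) (hC : ∀ i x, C i (C' i x) = x)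
    (hC2 : ∀ i x, C' i (C i x) = x) (j : ℤ) (z : E × E) :
    ∃ u : ℤ → E, (u j, u (j + 1)) = z ∧ ∀ i, hess A B C u i = 0 := by
  obtain ⟨Z, hZ, hrec⟩ := exists_int_rec
    (fun i (x : E × E) => (x.2, -C' (i + 1) (B i x.1 + A (i + 1) x.2)))
    (fun i (x : E × E) => (-B' i (A (i + 1) x.1 + C (i + 1) x.2), x.1))
    (by
      intro i a
      ext1
      · rfl
      · simp [hB, hC2]) j z
  have hs : ∀ i, (Z (i + 1)).1 = (Z i).2 := fun i => by rw [hrec]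
  refine ⟨fun i => (Z i).1, ?_, fun i => ?_⟩
  · simp only [hs, hZ]
  · have h1 := hrec (i - 1)
    have h2 := hs (i - 1)
    rw [sub_add_cancel] at h1 h2
    simp only [hess, hs, h1, map_neg, hC]
    abel

lemma growth (A B C C' : ℤ → E →L[ℝ] E) {M : ℝ} (hM : 0 < M)
    (hA : ∀ i, ‖A i‖ ≤ M) (hB : ∀ i, ‖B i‖ ≤ M) (hC' : ∀ i, ‖C' i‖ ≤ M)
    (hC2 : ∀ i x, C' i (C i x) = x) (u : ℤ → E) (hu : ∀ i, hess A B C u i = 0) (j : ℤ) (m : ℕ) :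
    ‖(u (j + m), u (j + m + 1))‖ ≤ (1 + 2 * M ^ 2) ^ m * ‖(u j, u (j + 1))‖ := by
  induction m with
  | zero => simp
  | succ m ih =>
    set k : ℤ := j + m with hk
    have hk' : j + ((m + 1 : ℕ) : ℤ) = k + 1 := by push_cast; omega
    rw [hk']
    have hstep : ‖(u (k + 1), u (k + 1 + 1))‖ ≤ (1 + 2 * M ^ 2) * ‖(u k, u (k + 1))‖ := by
      have hx : ‖u k‖ ≤ ‖(u k, u (k + 1))‖ := le_max_left _ _
      have hy : ‖u (k + 1)‖ ≤ ‖(u k, u (k + 1))‖ := le_max_right _ _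
      set r := ‖(u k, u (k + 1))‖
      have hr : 0 ≤ r := norm_nonneg _
      have he : C (k + 1) (u (k + 1 + 1)) = -(B k (u k) + A (k + 1) (u (k + 1))) := by
        have := hu (k + 1)
        rw [hess, add_sub_cancel_right] at this
        exact (neg_eq_of_add_eq_zero_right this).symm
      have h2 : ‖u (k + 1 + 1)‖ ≤ M * (M * r + M * r) := by
        rw [← hC2 (k + 1) (u (k + 1 + 1)), he]
        refine ((C' (k + 1)).le_of_opNorm_le (hC' _) _).trans ?_
        rw [norm_neg]
        refine mul_le_mul_of_nonneg_left ((norm_add_le _ _).trans (add_le_add ?_ ?_)) hM.le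
        · exact ((B k).le_of_opNorm_le (hB _) _).trans (mul_le_mul_of_nonneg_left hx hM.le)
        · exact ((A (k + 1)).le_of_opNorm_le (hA _) _).trans (mul_le_mul_of_nonneg_left hy hM.le)
      refine max_le ?_ ?_
      · change ‖u (k + 1)‖ ≤ _
        nlinarith [mul_nonneg (sq_nonneg M) hr]
      · change ‖u (k + 1 + 1)‖ ≤ _
        nlinarith
    calc _ ≤ _ := hstep
      _ ≤ (1 + 2 * M ^ 2) * ((1 + 2 * M ^ 2) ^ m * ‖(u j, u (j + 1))‖) := by gcongr
      _ = _ := by ring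

/-- Uniform bound on the splitting into stable and unstable parts. Here `z = p + q` is the splitting
at an index `j`, and `zm`, `pm`, `qm` are the values of the same three solutions `m` steps later. -/
lemma splitting_bound {F : Type*} [SeminormedAddCommGroup F] {p q pm qm zm z : F} {L : ℝ} (hz : z = p + q) (hzm : zm = pm + qm)
    (hL : ‖zm‖ ≤ L * ‖z‖) (hp : ‖pm‖ ≤ 1 / 2 * ‖p‖) (hq : ‖q‖ ≤ 1 / 2 * ‖qm‖) :
    ‖p‖ ≤ (L + 2) * ‖z‖ ∧ ‖q‖ ≤ (L + 2) * ‖z‖ := by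
  have h1 : ‖qm‖ ≤ ‖zm‖ + ‖pm‖ := by
    have : qm = zm - pm := by rw [hzm]; abel
    rw [this]; exact norm_sub_le _ _
  have h2 : ‖p‖ ≤ ‖z‖ + ‖q‖ := by
    have : p = z - q := by rw [hz]; abel
    rw [this]; exact norm_sub_le _ _
  have h0 := norm_nonneg z
  have h3 := norm_nonneg zm
  constructor <;> nlinarith

lemma summable_pow_natAbs {μ : ℝ} (h0 : 0 < μ) (h1 : μ < 1) :
    Summable fun k : ℤ => μ ^ k.natAbs := by
  refine Summable.of_nat_of_neg ?_ ?_ <;>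
  simpa using summable_geometric_of_lt_one h0.le h1

/-- Superposition: single-site responses decaying exponentially away from their site, uniformly in
the site, add up to a bounded solution of `H u = f`. -/
lemma exists_bounded_solution [CompleteSpace E] (A B C : ℤ → E →L[ℝ] E) {μ K R : ℝ} (h0 : 0 < μ)
    (h1 : μ < 1) (hK : 0 ≤ K)
    (hG : ∀ (j : ℤ) (v : E), ∃ w : ℤ → E, (∀ i, hess A B C w i = if i = j then v else 0) ∧
      ∀ i, ‖w i‖ ≤ K * μ ^ (i - j).natAbs * ‖v‖)
    (f : ℤ → E) (hf : ∀ i, ‖f i‖ ≤ R) :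
    ∃ u : ℤ → E, (∃ R', ∀ i, ‖u i‖ ≤ R') ∧ ∀ i, hess A B C u i = f i := by
  choose w hw hwb using fun j => hG j (f j)
  have hsum : Summable fun k : ℤ => K * μ ^ k.natAbs * R :=
    ((summable_pow_natAbs h0 h1).mul_left K).mul_right R
  have hsum' : ∀ i : ℤ, Summable fun j : ℤ => K * μ ^ (i - j).natAbs * R := fun i =>
    (Equiv.subLeft i).summable_iff.mpr hsum
  have hb : ∀ i j, ‖w j i‖ ≤ K * μ ^ (i - j).natAbs * R := fun i j =>
    (hwb j i).trans (mul_le_mul_of_nonneg_left (hf j) (by positivity))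
  have hs : ∀ i, Summable fun j => w j i := fun i => Summable.of_norm_bounded (hsum' i) (hb i)
  refine ⟨fun i => ∑' j, w j i, ⟨∑' k : ℤ, K * μ ^ k.natAbs * R, fun i => ?_⟩, fun i => ?_⟩
  · refine (tsum_of_norm_bounded (hsum' i).hasSum (hb i)).trans_eq ?_
    exact (Equiv.subLeft i).tsum_eq fun k : ℤ => K * μ ^ k.natAbs * R
  · have hh := (((B (i - 1)).hasSum (hs (i - 1)).hasSum).add
      ((A i).hasSum (hs i).hasSum)).add ((C i).hasSum (hs (i + 1)).hasSum)
    refine hh.unique ?_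
    have : (fun j => B (i - 1) (w j (i - 1)) + A i (w j i) + C i (w j (i + 1))) =
        fun j => if j = i then f i else 0 := by
      funext j
      refine (hw j i).trans ?_
      by_cases h : i = j
      · subst h; simp
      · simp [h, Ne.symm h]
    rw [this]
    exact hasSum_ite_eq i (f i)

/-- The Green's function of a hyperbolic trajectory: the response to a forcing `v` at the single
index `j` decays exponentially away from `j`, with constants independent of `j`. -/
lemma exists_green (A B C B' C' : ℤ → E →L[ℝ] E) {M : ℝ} (hM : 0 < M)
    (hA : ∀ i, ‖A i‖ ≤ M) (hB : ∀ i, ‖B i‖ ≤ M) (hC' : ∀ i, ‖C' i‖ ≤ M)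
    (hB1 : ∀ i x, B i (B' i x) = x) (hC1 : ∀ i x, C i (C' i x) = x)
    (hC2 : ∀ i x, C' i (C i x) = x) {c μ : ℝ} (hc : 0 < c) (h0 : 0 < μ) (h1 : μ < 1)
    (Ep Em : ℤ → Submodule ℝ (E × E)) (hsup : ∀ j, Ep j ⊔ Em j = ⊤)
    (hi : ∀ (j : ℤ) (u : ℤ → E), (∀ i, j < i → hess A B C u i = 0) → (u j, u (j + 1)) ∈ Ep j →
      ∀ i, j < i → (u i, u (i + 1)) ∈ Ep i ∧
        ‖(u i, u (i + 1))‖ ≤ c * μ ^ (i - j) * ‖(u j, u (j + 1))‖)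
    (hii : ∀ (j : ℤ) (u : ℤ → E), (∀ i, i ≤ j → hess A B C u i = 0) → (u j, u (j + 1)) ∈ Em j →
      ∀ i, i < j → (u i, u (i + 1)) ∈ Em i ∧
        ‖(u i, u (i + 1))‖ ≤ c * μ ^ (j - i) * ‖(u j, u (j + 1))‖)
    (hiiim : ∀ (j : ℤ) (u : ℤ → E), (∀ i, i ≤ j → hess A B C u i = 0) →
      (∃ M' : ℝ, ∀ i, i ≤ j + 1 → ‖u i‖ ≤ M') → (u j, u (j + 1)) ∈ Em j) :
    ∃ K : ℝ, 0 ≤ K ∧ ∀ (j : ℤ) (v : E), ∃ w : ℤ → E,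
      (∀ i, hess A B C w i = if i = j then v else 0) ∧
      ∀ i, ‖w i‖ ≤ K * μ ^ (i - j).natAbs * ‖v‖ := by
  obtain ⟨m, hm0, hm⟩ : ∃ m : ℕ, 0 < m ∧ c * μ ^ m ≤ 1 / 2 := by
    obtain ⟨k, hk⟩ := exists_pow_lt_of_lt_one (show (0 : ℝ) < 1 / 2 / c by positivity) h1
    refine ⟨k + 1, k.succ_pos, ?_⟩
    have h2 : μ ^ (k + 1) ≤ μ ^ k := pow_le_pow_of_le_one h0.le h1.le k.le_succ
    have h3 := (lt_div_iff₀ hc).mp (h2.trans_lt hk)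
    linarith
  set L : ℝ := (1 + 2 * M ^ 2) ^ m with hL
  have hLpos : 0 < L := by positivity
  refine ⟨(c + 1) * ((L + 2) * M), by positivity, fun j v => ?_⟩
  set z : E × E := (0, C' j v) with hz
  have hznorm : ‖z‖ ≤ M * ‖v‖ := by
    refine max_le ?_ ((C' j).le_of_opNorm_le (hC' j) v)
    simp only [hz, norm_zero]
    positivity
  obtain ⟨p, hp, q, hq, hpq⟩ := Submodule.mem_sup.mp (hsup j ▸ Submodule.mem_top : z ∈ Ep j ⊔ Em j)
  obtain ⟨a, haj, ha⟩ := exists_solution A B C B' C' hB1 hC1 hC2 j p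
  obtain ⟨b, hbj, hb⟩ := exists_solution A B C B' C' hB1 hC1 hC2 j q
  have hda := hi j a (fun i _ => ha i) (by rw [haj]; exact hp)
  have hdb := hii j b (fun i _ => hb i) (by rw [hbj]; exact hq)
  rw [haj] at hda
  rw [hbj] at hdb
  have hjm : j < j + m := by omega
  -- The unstable solution is bounded on `(-∞, j + m + 1]`: by (ii) up to index `j`, and the finitely
  -- many remaining values are bounded by the sum of their norms.
  have hbm : (b (j + m), b (j + m + 1)) ∈ Em (j + m) := by
    refine hiiim _ b (fun i _ => hb i)
      ⟨c * ‖q‖ + ∑ k ∈ Finset.Icc j (j + m + 1), ‖b k‖, fun i hile => ?_⟩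
    have hnn : 0 ≤ ∑ k ∈ Finset.Icc j (j + m + 1), ‖b k‖ :=
      Finset.sum_nonneg fun _ _ => norm_nonneg _
    rcases lt_or_ge i j with hij | hij
    · have h2 : μ ^ (j - i) ≤ 1 := by
        obtain ⟨k, hk⟩ := Int.le.dest hij.le
        rw [show j - i = (k : ℤ) by omega, zpow_natCast]
        exact pow_le_one₀ h0.le h1.le
      have h3 : c * μ ^ (j - i) * ‖q‖ ≤ c * ‖q‖ := by
        gcongr
        exact mul_le_of_le_one_right hc.le h2
      have h4 : ‖b i‖ ≤ ‖(b i, b (i + 1))‖ := le_max_left _ _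
      linarith [(hdb i hij).2]
    · have h5 := Finset.single_le_sum (f := fun k => ‖b k‖) (fun _ _ => norm_nonneg _)
        (Finset.mem_Icc.mpr ⟨hij, hile⟩)
      have : 0 ≤ c * ‖q‖ := by positivity
      linarith
  have hbback := (hii (j + m) b (fun i _ => hb i) hbm j hjm).2
  have haforw := (hda (j + m) hjm).2
  rw [add_sub_cancel_left, zpow_natCast] at hbback haforw
  rw [hbj] at hbback
  have hgrow := growth A B C C' hM hA hB hC' hC2 (fun i => a i + b i)
    (fun i => by
      have e1 := ha i
      have e2 := hb i
      simp only [hess, map_add] at e1 e2 ⊢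
      calc _ = (B (i - 1) (a (i - 1)) + A i (a i) + C i (a (i + 1))) +
            (B (i - 1) (b (i - 1)) + A i (b i) + C i (b (i + 1))) := by abel
        _ = 0 := by rw [e1, e2, add_zero]) j m
  have hzab : (a j + b j, a (j + 1) + b (j + 1)) = z := by
    rw [← hpq, ← haj, ← hbj]; rfl
  simp only [hzab] at hgrow
  obtain ⟨hpb, hqb⟩ := splitting_bound (zm := (a (j + m) + b (j + m), a (j + m + 1) + b (j + m + 1)))
    hpq.symm rfl hgrow (haforw.trans (mul_le_mul_of_nonneg_right hm (norm_nonneg _)))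
    (hbback.trans (mul_le_mul_of_nonneg_right hm (norm_nonneg _)))
  have hD : ∀ x : E × E, ‖x‖ ≤ (L + 2) * ‖z‖ → ‖x‖ ≤ (L + 2) * M * ‖v‖ := fun x hx =>
    hx.trans (by rw [mul_assoc]; gcongr)
  replace hpb := hD p hpb
  replace hqb := hD q hqb
  have hj0 : a j = -b j := by
    have := congrArg Prod.fst hzab
    exact eq_neg_of_add_eq_zero_left this
  have hj1 : a (j + 1) + b (j + 1) = C' j v := congrArg Prod.snd hzab
  refine ⟨fun i => if j ≤ i then a i else -b i, fun i => ?_, fun i => ?_⟩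
  · rcases lt_trichotomy i j with h | rfl | h
    · have e : (if j ≤ i + 1 then a (i + 1) else -b (i + 1)) = -b (i + 1) := by
        split_ifs with h'
        · obtain rfl : j = i + 1 := by omega
          exact hj0
        · rfl
      have hbi := hb i
      simp only [hess] at hbi ⊢
      rw [e, if_neg (by omega), if_neg (by omega), if_neg (by omega)]
      simp only [map_neg]
      rw [← neg_add, ← neg_add, hbi, neg_zero]
    · have hbi := hb i
      simp only [hess] at hbi ⊢
      rw [if_neg (by omega), if_pos le_rfl, if_pos (by omega), if_pos trivial, hj0,
        eq_sub_of_add_eq hj1, map_sub, hC1, map_neg, map_neg]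
      rw [show -B (i - 1) (b (i - 1)) + -A i (b i) + (v - C i (b (i + 1)))
        = v - (B (i - 1) (b (i - 1)) + A i (b i) + C i (b (i + 1))) by abel, hbi, sub_zero]
    · have hai := ha i
      simp only [hess] at hai ⊢
      rw [if_pos (by omega), if_pos (by omega), if_pos (by omega), if_neg (by omega), hai]
  · -- The factor `c + 1` covers `i = j`, where the decay estimates do not apply.
    have key : ∀ (x y : E × E) (k : ℕ), ‖y‖ ≤ (L + 2) * M * ‖v‖ → ‖x‖ ≤ (c + 1) * μ ^ k * ‖y‖ →
        ‖x.1‖ ≤ (c + 1) * ((L + 2) * M) * μ ^ k * ‖v‖ := fun x y k hy hx =>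
      calc ‖x.1‖ ≤ ‖x‖ := le_max_left _ _
        _ ≤ _ := hx
        _ ≤ (c + 1) * μ ^ k * ((L + 2) * M * ‖v‖) := by gcongr
        _ = _ := by ring
    have hc1 : c ≤ c + 1 := by linarith
    rcases lt_trichotomy i j with h | rfl | h
    · obtain ⟨k, hk⟩ := Int.le.dest h.le
      have e : j - i = (k : ℤ) := by omega
      have e2 : (i - j).natAbs = k := by omega
      have h2 := (hdb i h).2
      rw [e, zpow_natCast] at h2
      simp only [if_neg (not_le.mpr h), norm_neg, e2]
      exact key (b i, b (i + 1)) q k hqb (h2.trans (by gcongr))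
    · simp only [le_refl, if_true, sub_self, Int.natAbs_zero]
      refine key (a i, a (i + 1)) p 0 hpb ?_
      rw [haj, pow_zero, mul_one]
      nlinarith [norm_nonneg p]
    · obtain ⟨k, hk⟩ := Int.le.dest h.le
      have e : i - j = (k : ℤ) := by omega
      have e2 : (i - j).natAbs = k := by omega
      have h2 := (hda i h).2
      rw [e, zpow_natCast] at h2
      simp only [if_pos h.le, e2]
      exact key (a i, a (i + 1)) p k hpb (h2.trans (by gcongr))

/-- The block-tridiagonal operator as a bounded operator on `ℓ∞`. -/
lemma exists_hess_clm (A B C : ℤ → E →L[ℝ] E) {M : ℝ} (hM : 0 < M)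
    (hA : ∀ i, ‖A i‖ ≤ M) (hB : ∀ i, ‖B i‖ ≤ M) (hC : ∀ i, ‖C i‖ ≤ M) :
    ∃ H : lp (fun _ : ℤ => E) ∞ →L[ℝ] lp (fun _ : ℤ => E) ∞, ∀ u i, H u i = hess A B C u i := by
  have hb : ∀ (u : lp (fun _ : ℤ => E) ∞) (i : ℤ), ‖hess A B C u i‖ ≤ 3 * M * ‖u‖ := by
    intro u i
    have hu := fun k => lp.norm_apply_le_norm ENNReal.top_ne_zero u k
    have e1 := ((B (i - 1)).le_of_opNorm_le (hB _) (u (i - 1))).trans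
      (mul_le_mul_of_nonneg_left (hu _) hM.le)
    have e2 := ((A i).le_of_opNorm_le (hA _) (u i)).trans (mul_le_mul_of_nonneg_left (hu _) hM.le)
    have e3 := ((C i).le_of_opNorm_le (hC _) (u (i + 1))).trans
      (mul_le_mul_of_nonneg_left (hu _) hM.le)
    calc ‖hess A B C u i‖ ≤ _ := norm_add₃_le
      _ ≤ 3 * M * ‖u‖ := by linarith
  let H₀ : lp (fun _ : ℤ => E) ∞ →ₗ[ℝ] lp (fun _ : ℤ => E) ∞ :=
    { toFun := fun u => ⟨fun i => hess A B C u i,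
        memℓp_infty ⟨3 * M * ‖u‖, by rintro _ ⟨i, rfl⟩; exact hb u i⟩⟩
      map_add' := fun u v => by
        ext1; funext i
        change hess A B C (u + v : lp (fun _ : ℤ => E) ∞) i = hess A B C u i + hess A B C v i
        simp only [hess, lp.coeFn_add, Pi.add_apply, map_add]
        abel
      map_smul' := fun r u => by
        ext1; funext i
        change hess A B C (r • u : lp (fun _ : ℤ => E) ∞) i = r • hess A B C u i
        simp only [hess, lp.coeFn_smul, Pi.smul_apply, map_smul, smul_add] }
  exact ⟨H₀.mkContinuous (3 * M) fun u => lp.norm_le_of_forall_le (by positivity) (hb u),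
    fun u i => rfl⟩

end Helpers

/-- the paper's Proposition: hyperbolicity implies bounded inverse of the
Hessian. Under the twist condition (invertible off-diagonal blocks with uniform bounds)
and hyperbolicity (exponential dichotomy with `n`-dimensional stable/unstable subspaces
`E_j⁺, E_j⁻`), the block-tridiagonal operator `H` is a bijective bounded operator on
`ℓ∞(ℤ, ℝⁿ)` with a bounded inverse: `‖u‖∞ ≤ K·‖H u‖∞`. -/
theorem stmt4 (n : ℕ) (hn : 1 ≤ n) (M : ℝ) (hM : 0 < M)
    (A B C : ℤ → EuclideanSpace ℝ (Fin n) →L[ℝ] EuclideanSpace ℝ (Fin n))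
    (hA : ∀ i : ℤ, ‖A i‖ ≤ M) (hB : ∀ i : ℤ, ‖B i‖ ≤ M) (hC : ∀ i : ℤ, ‖C i‖ ≤ M)
    (hBinv : ∀ i : ℤ, ∃ Bi : EuclideanSpace ℝ (Fin n) ≃L[ℝ] EuclideanSpace ℝ (Fin n),
      (Bi : EuclideanSpace ℝ (Fin n) →L[ℝ] EuclideanSpace ℝ (Fin n)) = B i ∧
      ‖(Bi.symm : EuclideanSpace ℝ (Fin n) →L[ℝ] EuclideanSpace ℝ (Fin n))‖ ≤ M)
    (hCinv : ∀ i : ℤ, ∃ Ci : EuclideanSpace ℝ (Fin n) ≃L[ℝ] EuclideanSpace ℝ (Fin n),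
      (Ci : EuclideanSpace ℝ (Fin n) →L[ℝ] EuclideanSpace ℝ (Fin n)) = C i ∧
      ‖(Ci.symm : EuclideanSpace ℝ (Fin n) →L[ℝ] EuclideanSpace ℝ (Fin n))‖ ≤ M)
    (c μ : ℝ) (hc : 0 < c) (hμ : μ ∈ Set.Ioo (0 : ℝ) 1)
    (Ep Em : ℤ → Submodule ℝ (EuclideanSpace ℝ (Fin n) × EuclideanSpace ℝ (Fin n)))
    (hdimp : ∀ j : ℤ, Module.finrank ℝ (Ep j) = n)
    (hdimm : ∀ j : ℤ, Module.finrank ℝ (Em j) = n)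
    (htrans : ∀ j : ℤ, Ep j ⊓ Em j = ⊥)
    -- (i) forward invariance and exponential contraction on the stable subspaces
    (hi : ∀ (j : ℤ) (u : ℤ → EuclideanSpace ℝ (Fin n)),
      (∀ i : ℤ, j < i → B (i - 1) (u (i - 1)) + A i (u i) + C i (u (i + 1)) = 0) →
      (u j, u (j + 1)) ∈ Ep j →
      ∀ i : ℤ, j < i → (u i, u (i + 1)) ∈ Ep i ∧
        ‖(u i, u (i + 1))‖ ≤ c * μ ^ (i - j) * ‖(u j, u (j + 1))‖)
    -- (ii) backward invariance and exponential contraction on the unstable subspaces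
    (hii : ∀ (j : ℤ) (u : ℤ → EuclideanSpace ℝ (Fin n)),
      (∀ i : ℤ, i ≤ j → B (i - 1) (u (i - 1)) + A i (u i) + C i (u (i + 1)) = 0) →
      (u j, u (j + 1)) ∈ Em j →
      ∀ i : ℤ, i < j → (u i, u (i + 1)) ∈ Em i ∧
        ‖(u i, u (i + 1))‖ ≤ c * μ ^ (j - i) * ‖(u j, u (j + 1))‖)
    -- (iii) the dichotomy: bounded forward (resp. backward) solutions are stable (resp. unstable)
    (hiiip : ∀ (j : ℤ) (u : ℤ → EuclideanSpace ℝ (Fin n)),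
      (∀ i : ℤ, j < i → B (i - 1) (u (i - 1)) + A i (u i) + C i (u (i + 1)) = 0) →
      (∃ M' : ℝ, ∀ i : ℤ, j ≤ i → ‖u i‖ ≤ M') →
      (u j, u (j + 1)) ∈ Ep j)
    (hiiim : ∀ (j : ℤ) (u : ℤ → EuclideanSpace ℝ (Fin n)),
      (∀ i : ℤ, i ≤ j → B (i - 1) (u (i - 1)) + A i (u i) + C i (u (i + 1)) = 0) →
      (∃ M' : ℝ, ∀ i : ℤ, i ≤ j + 1 → ‖u i‖ ≤ M') →
      (u j, u (j + 1)) ∈ Em j) :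
    ∃ H : lp (fun _ : ℤ => EuclideanSpace ℝ (Fin n)) ∞ →L[ℝ]
        lp (fun _ : ℤ => EuclideanSpace ℝ (Fin n)) ∞,
      (∀ (u : lp (fun _ : ℤ => EuclideanSpace ℝ (Fin n)) ∞) (i : ℤ),
        H u i = B (i - 1) (u (i - 1)) + A i (u i) + C i (u (i + 1))) ∧
      Function.Bijective H ∧
      ∃ K : ℝ, 0 < K ∧ ∀ u : lp (fun _ : ℤ => EuclideanSpace ℝ (Fin n)) ∞,
        ‖u‖ ≤ K * ‖H u‖ := by
  choose Bi hBi hBn using hBinv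
  choose Ci hCi hCn using hCinv
  have hB1 : ∀ i x, B i ((Bi i).symm x) = x := fun i x => by rw [← hBi]; simp
  have hC1 : ∀ i x, C i ((Ci i).symm x) = x := fun i x => by rw [← hCi]; simp
  have hC2 : ∀ i x, (Ci i).symm (C i x) = x := fun i x => by rw [← hCi]; simp
  have hsup : ∀ j, Ep j ⊔ Em j = ⊤ := by
    intro j
    apply Submodule.eq_top_of_finrank_eq
    have h := Submodule.finrank_sup_add_finrank_inf_eq (Ep j) (Em j)
    rw [htrans, finrank_bot, hdimp, hdimm] at h
    rw [Module.finrank_prod, finrank_euclideanSpace_fin]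
    exact h
  obtain ⟨K, hK, hG⟩ := exists_green A B C (fun i => (Bi i).symm) (fun i => (Ci i).symm) hM hA hB
    hCn hB1 hC1 hC2 hc hμ.1 hμ.2 Ep Em hsup hi hii hiiim
  obtain ⟨H, hH⟩ := exists_hess_clm A B C hM hA hB hC
  have hinj : Function.Injective H := by
    rw [injective_iff_map_eq_zero]
    intro u hu
    have hsol : ∀ i, hess A B C u i = 0 := fun i => by rw [← hH, hu]; rfl
    have hbd := fun k => lp.norm_apply_le_norm ENNReal.top_ne_zero u k
    ext1
    funext j
    have hmem : (u j, u (j + 1)) ∈ Ep j ⊓ Em j :=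
      ⟨hiiip j u (fun i _ => hsol i) ⟨‖u‖, fun i _ => hbd i⟩,
        hiiim j u (fun i _ => hsol i) ⟨‖u‖, fun i _ => hbd i⟩⟩
    rw [htrans, Submodule.mem_bot] at hmem
    exact congrArg Prod.fst hmem
  have hsurj : Function.Surjective H := by
    intro f
    obtain ⟨u, ⟨R, hR⟩, hu⟩ := exists_bounded_solution A B C hμ.1 hμ.2 hK hG f
      (fun k => lp.norm_apply_le_norm ENNReal.top_ne_zero f k)
    refine ⟨⟨u, memℓp_infty ⟨R, by rintro _ ⟨i, rfl⟩; exact hR i⟩⟩, ?_⟩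
    ext1
    funext i
    rw [hH]
    exact hu i
  refine ⟨H, hH, ⟨hinj, hsurj⟩, ?_⟩
  let e := ContinuousLinearEquiv.ofBijective H (LinearMap.ker_eq_bot.mpr hinj)
    (LinearMap.range_eq_top.mpr hsurj)
  let S : lp (fun _ : ℤ => EuclideanSpace ℝ (Fin n)) ∞ →L[ℝ]
    lp (fun _ : ℤ => EuclideanSpace ℝ (Fin n)) ∞ := e.symm
  refine ⟨‖S‖ + 1, by positivity, fun u => ?_⟩
  have h : S (H u) = u := e.symm_apply_apply u
  calc ‖u‖ = ‖S (H u)‖ := by rw [h]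
    _ ≤ ‖S‖ * ‖H u‖ := S.le_opNorm _
    _ ≤ (‖S‖ + 1) * ‖H u‖ := by gcongr; linarith
end

section
/- Let n ≥ 1, let U ⊆ ℝⁿ × ℝⁿ be open, let S : ℝⁿ × ℝⁿ → ℝ be twice continuously differentiable on U, let h : ℝⁿ × ℝⁿ → ℝ be differentiable, and let E₀ ∈ ℝ. For (x,y) ∈ U set p₋(x,y) = −∇_x S(x,y) (the gradient of x' ↦ S(x',y) at x) and p₊(x,y) = ∇_y S(x,y), and let v₋(x,y) be the gradient of p ↦ h(x,p) at p₋(x,y) and v₊(x,y) the gradient of p ↦ h(y,p) at p₊(x,y). Assume the Hamilton–Jacobi equations hold on U: h(x, p₋(x,y)) = E₀ and h(y, p₊(x,y)) = E₀ for all (x,y) ∈ U. Let B_{(x,y)} be the twist bilinear form on ℝⁿ × ℝⁿ defined by B_{(x,y)}(u,w) = D²S(x,y)[(u,0),(0,w)] (the mixed second derivative). Then for every (x,y) ∈ U: B_{(x,y)}(v₋(x,y), w) = 0 for all w ∈ ℝⁿ, and B_{(x,y)}(u, v₊(x,y)) = 0 for all u ∈ ℝⁿ. In particular, if v₋(x,y)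 ≠ 0 then the bilinear form B_{(x,y)} is degenerate. -/
/-!
At fixed `x`, the equation `h (x, p₋(x, y)) = E₀` is differentiated in `y`: since only the momentum
moves, the derivative of `p₋` in any direction `w` is orthogonal to `v₋ = ∇ₚ h`. As `p₋` is minus
the partial gradient of `S`, that derivative paired with `v₋` is `-D²S[(0, w), (v₋, 0)]`, and
symmetry of the second derivative gives the first claim. Fixing `y` and differentiating
`h (y, p₊(x, y)) = E₀` in `x` gives the second. Both cases are instances of
`apply_map_gradient_eq_zero_of_eventually_const`, in which the momentum is a partial derivative of
`S`, regarded as a covector.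
-/

open Filter Topology InnerProductSpace

section Helpers

variable {E : Type*} [NormedAddCommGroup E] [InnerProductSpace ℝ E] [CompleteSpace E]

/-- If a function `f` of the momentum is constant along the momenta Riesz-dual to the covectors
`G z`, then the derivative of `G` annihilates the velocity `∇f`. -/
lemma apply_gradient_eq_zero_of_eventually_const {f : E → ℝ} {G : E → StrongDual ℝ E}
    {G' : E →L[ℝ] StrongDual ℝ E} {z : E} {c : ℝ} (hG : HasFDerivAt G G' z)
    (hf : DifferentiableAt ℝ f ((toDual ℝ E).symm (G z)))
    (hc : ∀ᶠ z' in 𝓝 z, f ((toDual ℝ E).symm (G z')) = c) (w : E) :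
    G' w (gradient f ((toDual ℝ E).symm (G z))) = 0 := by
  -- `toDual` is typed as conjugate-linear; over `ℝ` its inverse is repackaged as a linear map.
  let R : StrongDual ℝ E →L[ℝ] E :=
    { toFun := (toDual ℝ E).symm
      map_add' := fun a b => map_add _ a b
      map_smul' := fun r a => by simp
      cont := (toDual ℝ E).symm.continuous }
  have h1 : HasFDerivAt (fun z' => (toDual ℝ E).symm (G z')) (R.comp G') z :=
    R.hasFDerivAt.comp z hG
  have h2 := hf.hasFDerivAt.comp z h1
  have h3 : HasFDerivAt (fun z' => f ((toDual ℝ E).symm (G z'))) (0 : E →L[ℝ] ℝ) z :=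
    (hasFDerivAt_const c z).congr_of_eventuallyEq hc
  have h4 := congrArg (fun L : E →L[ℝ] ℝ => L w) (h2.unique h3)
  have h5 : fderiv ℝ f ((toDual ℝ E).symm (G z)) ((toDual ℝ E).symm (G' w)) = 0 := h4
  rw [← toDual_symm_apply (𝕜 := ℝ) (y := G' w), real_inner_comm, gradient, toDual_symm_apply]
  exact h5

/-- The same for covectors on another space `F`, pulled back to `E` along a fixed map `L`. -/
lemma apply_map_gradient_eq_zero_of_eventually_const {F : Type*} [NormedAddCommGroup F]
    [NormedSpace ℝ F] {f : E → ℝ} {Φ : E → StrongDual ℝ F} {Φ' : E →L[ℝ] StrongDual ℝ F}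
    {z : E} {c : ℝ} (hΦ : HasFDerivAt Φ Φ' z) (L : E →L[ℝ] F)
    (hf : Differentiable ℝ f)
    (hc : ∀ᶠ z' in 𝓝 z, f ((toDual ℝ E).symm ((Φ z').comp L)) = c) (w : E) :
    Φ' w (L (gradient f ((toDual ℝ E).symm ((Φ z).comp L)))) = 0 := by
  have hG : HasFDerivAt (fun z' => (Φ z').comp L) ((L.precomp ℝ).comp Φ') z := by
    have := HasFDerivAt.comp (g := L.precomp ℝ) z (L.precomp ℝ).hasFDerivAt hΦ
    exact this
  exact apply_gradient_eq_zero_of_eventually_const hG (hf _) hc w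

lemma gradient_fst_eq {S : E × E → ℝ} {x y : E} (hS : DifferentiableAt ℝ S (x, y)) :
    gradient (fun x' => S (x', y)) x =
      (toDual ℝ E).symm ((fderiv ℝ S (x, y)).comp (ContinuousLinearMap.inl ℝ E E)) := by
  rw [gradient]
  congr 1
  exact (hS.hasFDerivAt.comp x (hasFDerivAt_prodMk_left x y)).fderiv

lemma gradient_snd_eq {S : E × E → ℝ} {x y : E} (hS : DifferentiableAt ℝ S (x, y)) :
    gradient (fun y' => S (x, y')) y =
      (toDual ℝ E).symm ((fderiv ℝ S (x, y)).comp (ContinuousLinearMap.inr ℝ E E)) := by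
  rw [gradient]
  congr 1
  exact (hS.hasFDerivAt.comp y (hasFDerivAt_prodMk_right x y)).fderiv

lemma twist_initial_velocity {U : Set (E × E)} (hU : IsOpen U) {S h : E × E → ℝ}
    (hS : ContDiffOn ℝ 2 S U) (hh : Differentiable ℝ h) {E₀ : ℝ} {x y : E} (hxy : (x, y) ∈ U)
    (hHJ : ∀ y', (x, y') ∈ U → h (x, -gradient (fun x' => S (x', y')) x) = E₀) (w : E) :
    fderiv ℝ (fderiv ℝ S) (x, y)
      (gradient (fun p => h (x, p)) (-gradient (fun x' => S (x', y)) x), 0) (0, w) = 0 := by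
  have hdiff : ∀ q ∈ U, DifferentiableAt ℝ S q := fun q hq =>
    (hS.contDiffAt (hU.mem_nhds hq)).differentiableAt (by norm_num)
  have hSxy : ContDiffAt ℝ 2 S (x, y) := hS.contDiffAt (hU.mem_nhds hxy)
  have hD2 : HasFDerivAt (fderiv ℝ S) (fderiv ℝ (fderiv ℝ S) (x, y)) (x, y) :=
    ((hSxy.fderiv_right (m := 1) (by norm_num)).differentiableAt (by norm_num)).hasFDerivAt
  have hsymm : IsSymmSndFDerivAt ℝ S (x, y) := hSxy.isSymmSndFDerivAt (by simp)
  have hA : HasFDerivAt (fun y' => fderiv ℝ S (x, y'))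
      ((fderiv ℝ (fderiv ℝ S) (x, y)).comp (ContinuousLinearMap.inr ℝ E E)) y :=
    HasFDerivAt.comp (f := fun y' => (x, y')) (g := fderiv ℝ S) y hD2
      (hasFDerivAt_prodMk_right (𝕜 := ℝ) x y)
  have hmem : ∀ᶠ y' in 𝓝 y, (x, y') ∈ U :=
    (Continuous.prodMk_right x).continuousAt.eventually (hU.mem_nhds hxy)
  have hp : ∀ y', (x, y') ∈ U → (toDual ℝ E).symm
      ((fderiv ℝ S (x, y')).comp (-ContinuousLinearMap.inl ℝ E E)) =
        -gradient (fun x' => S (x', y')) x := fun y' hy' => by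
    rw [gradient_fst_eq (hdiff _ hy'), ← map_neg, ContinuousLinearMap.comp_neg]
  have key := apply_map_gradient_eq_zero_of_eventually_const (f := fun p => h (x, p)) (c := E₀)
    hA (-ContinuousLinearMap.inl ℝ E E) (by fun_prop)
    (by
      filter_upwards [hmem] with y' hy'
      rw [hp y' hy']
      exact hHJ y' hy') w
  rw [hp y hxy, neg_apply, map_neg, neg_eq_zero] at key
  rw [hsymm.eq]
  simpa using key

lemma twist_final_velocity {U : Set (E × E)} (hU : IsOpen U) {S h : E × E → ℝ}
    (hS : ContDiffOn ℝ 2 S U) (hh : Differentiable ℝ h) {E₀ : ℝ} {x y : E} (hxy : (x, y) ∈ U)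
    (hHJ : ∀ x', (x', y) ∈ U → h (y, gradient (fun y' => S (x', y')) y) = E₀) (u : E) :
    fderiv ℝ (fderiv ℝ S) (x, y)
      (u, 0) (0, gradient (fun p => h (y, p)) (gradient (fun y' => S (x, y')) y)) = 0 := by
  have hdiff : ∀ q ∈ U, DifferentiableAt ℝ S q := fun q hq =>
    (hS.contDiffAt (hU.mem_nhds hq)).differentiableAt (by norm_num)
  have hSxy : ContDiffAt ℝ 2 S (x, y) := hS.contDiffAt (hU.mem_nhds hxy)
  have hD2 : HasFDerivAt (fderiv ℝ S) (fderiv ℝ (fderiv ℝ S) (x, y)) (x, y) :=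
    ((hSxy.fderiv_right (m := 1) (by norm_num)).differentiableAt (by norm_num)).hasFDerivAt
  have hA : HasFDerivAt (fun x' => fderiv ℝ S (x', y))
      ((fderiv ℝ (fderiv ℝ S) (x, y)).comp (ContinuousLinearMap.inl ℝ E E)) x :=
    HasFDerivAt.comp (f := fun x' => (x', y)) (g := fderiv ℝ S) x hD2
      (hasFDerivAt_prodMk_left (𝕜 := ℝ) x y)
  have hmem : ∀ᶠ x' in 𝓝 x, (x', y) ∈ U :=
    (Continuous.prodMk_left y).continuousAt.eventually (hU.mem_nhds hxy)
  have key := apply_map_gradient_eq_zero_of_eventually_const (f := fun p => h (y, p)) (c := E₀)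
    hA (ContinuousLinearMap.inr ℝ E E) (by fun_prop)
    (by
      filter_upwards [hmem] with x' hx'
      rw [← gradient_snd_eq (hdiff _ hx')]
      exact hHJ x' hx') u
  rw [← gradient_snd_eq (hdiff _ hxy)] at key
  simpa using key

end Helpers

/-- Differentiating the Hamilton–Jacobi equations
`h(x, p₋(x,y)) = E₀`, `h(y, p₊(x,y)) = E₀` satisfied by the generating function `S`
shows that the initial velocity `v₋` annihilates the twist form
`B(u,w) = D²S(x,y)[(u,0),(0,w)]` in the first slot and the final velocity `v₊`
annihilates it in the second slot; in particular, if `v₋ ≠ 0` the twist form is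
degenerate. -/
theorem stmt5 (n : ℕ) (hn : 1 ≤ n)
    (U : Set (EuclideanSpace ℝ (Fin n) × EuclideanSpace ℝ (Fin n))) (hU : IsOpen U)
    (S : EuclideanSpace ℝ (Fin n) × EuclideanSpace ℝ (Fin n) → ℝ)
    (hS : ContDiffOn ℝ 2 S U)
    (h : EuclideanSpace ℝ (Fin n) × EuclideanSpace ℝ (Fin n) → ℝ)
    (hh : Differentiable ℝ h) (E₀ : ℝ)
    (hHJm : ∀ x y : EuclideanSpace ℝ (Fin n), (x, y) ∈ U →
      h (x, -gradient (fun x' => S (x', y)) x) = E₀)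
    (hHJp : ∀ x y : EuclideanSpace ℝ (Fin n), (x, y) ∈ U →
      h (y, gradient (fun y' => S (x, y')) y) = E₀) :
    ∀ x y : EuclideanSpace ℝ (Fin n), (x, y) ∈ U →
      (∀ w : EuclideanSpace ℝ (Fin n),
        fderiv ℝ (fderiv ℝ S) (x, y)
          (gradient (fun p => h (x, p)) (-gradient (fun x' => S (x', y)) x), 0) (0, w) = 0) ∧
      (∀ u : EuclideanSpace ℝ (Fin n),
        fderiv ℝ (fderiv ℝ S) (x, y)
          (u, 0) (0, gradient (fun p => h (y, p)) (gradient (fun y' => S (x, y')) y)) = 0) ∧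
      (gradient (fun p => h (x, p)) (-gradient (fun x' => S (x', y)) x) ≠ 0 →
        ∃ u : EuclideanSpace ℝ (Fin n), u ≠ 0 ∧
          ∀ w : EuclideanSpace ℝ (Fin n), fderiv ℝ (fderiv ℝ S) (x, y) (u, 0) (0, w) = 0) := by
  intro x y hxy
  have hm := twist_initial_velocity hU hS hh hxy fun y' => hHJm x y'
  exact ⟨hm, twist_final_velocity hU hS hh hxy fun x' => hHJp x' y, fun hv => ⟨_, hv, hm⟩⟩
end

section
/- Let n ≥ 1, let U ⊆ ℝⁿ × ℝⁿ be open, let S : ℝⁿ × ℝⁿ → ℝ be twice continuously differentiable on U, let h : ℝⁿ × ℝⁿ → ℝ be differentiable and E₀ ∈ ℝ, and assume the Hamilton–Jacobi equations h(x, −∇_x S(x,y)) = E₀ and h(y, ∇_y S(x,y)) = E₀ hold for all (x,y) ∈ U. Fix (x,y) ∈ U, let v₋ be the gradient of p ↦ h(x,p) at −∇_x S(x,y) and v₊ the gradient of p ↦ h(y,p) at ∇_y S(x,y), and let N₋, N₊ ⊆ ℝⁿ be linear subspaces. If the restriction to N₋ × N₊ of the twist bilinear form B(u,w) = D²S(x,y)[(u,0),(0,w)]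 is nondegenerate (i.e., for every nonzero u ∈ N₋ there is w ∈ N₊ with B(u,w) ≠ 0, and for every nonzero w ∈ N₊ there is u ∈ N₋ with B(u,w) ≠ 0), then: v₋ ≠ 0 implies v₋ ∉ N₋, and v₊ ≠ 0 implies v₊ ∉ N₊. -/
/-!
Keep `x` fixed and differentiate the Hamilton–Jacobi equation `h (x, -∇ₓS(x, y')) = E₀` with respect
to `y'` in a direction `w`. Only the momentum argument of `h` moves, so the chain rule gives
`⟪v₋, ∂_w ∇ₓS⟫ = 0`, that is `D²S(x,y)[(0,w),(v₋,0)] = 0`; by symmetry of the second derivative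
`B(v₋, w) = 0` for every `w`. In the same way the second equation, differentiated in `x'`, gives
`B(u, v₊) = 0` for every `u`. Thus `v₋` and `v₊` lie in the left and right kernels of `B`, and a
nonzero `v₋ ∈ N₋` or `v₊ ∈ N₊` would contradict nondegeneracy of the restriction.
Both cases are instances of `hessian_apply_gradient_eq_zero`.
-/

open InnerProductSpace Filter Topology

/-- Differentiation of a Hamilton–Jacobi type identity `φ (p (c w)) = E₀` in `w`, where `p z` is the
vector representing the functional `DS(z) ∘ L`: the Hessian of `S` vanishes on the pairs formed of
a velocity `M w` of `c` and the vector `L (∇φ)`. For a partial gradient of `S`, `L` is the inclusion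
of a factor up to sign. -/
theorem hessian_apply_gradient_eq_zero {V W E : Type*}
    [NormedAddCommGroup V] [InnerProductSpace ℝ V] [CompleteSpace V]
    [NormedAddCommGroup W] [NormedSpace ℝ W] [NormedAddCommGroup E] [NormedSpace ℝ E]
    {S : E → ℝ} {φ : V → ℝ} {c : W → E} {M : W →L[ℝ] E} {L : V →L[ℝ] E} {w₀ : W} {E₀ : ℝ}
    {p₀ : V} (hp₀ : (toDual ℝ V).symm ((fderiv ℝ S (c w₀)).comp L) = p₀)
    (hS : DifferentiableAt ℝ (fderiv ℝ S) (c w₀)) (hc : HasFDerivAt c M w₀)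
    (hφ : DifferentiableAt ℝ φ p₀)
    (heq : ∀ᶠ w in 𝓝 w₀, φ ((toDual ℝ V).symm ((fderiv ℝ S (c w)).comp L)) = E₀) (w : W) :
    fderiv ℝ (fderiv ℝ S) (c w₀) (M w) (L (gradient φ p₀)) = 0 := by
  subst hp₀
  have h₁ : HasFDerivAt (fun w => fderiv ℝ S (c w)) ((fderiv ℝ (fderiv ℝ S) (c w₀)).comp M) w₀ :=
    hS.hasFDerivAt.comp w₀ hc
  have h₂ : HasFDerivAt (fun w => (fderiv ℝ S (c w)).comp L)
      (((ContinuousLinearMap.compL ℝ V E ℝ).flip L).comp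
        ((fderiv ℝ (fderiv ℝ S) (c w₀)).comp M)) w₀ :=
    ((ContinuousLinearMap.compL ℝ V E ℝ).flip L).hasFDerivAt.comp w₀ h₁
  have h₃ := (toDual ℝ V).symm.toContinuousLinearEquiv.hasFDerivAt.comp w₀ h₂
  have h₄ := hφ.hasGradientAt.hasFDerivAt.comp w₀ h₃
  have h₅ := h₄.unique ((hasFDerivAt_const E₀ w₀).congr_of_eventuallyEq heq)
  have h₆ : inner ℝ (gradient φ ((toDual ℝ V).symm ((fderiv ℝ S (c w₀)).comp L)))
      ((toDual ℝ V).symm ((fderiv ℝ (fderiv ℝ S) (c w₀) (M w)).comp L)) = 0 :=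
    congrArg (fun A : W →L[ℝ] ℝ => A w) h₅
  rwa [real_inner_comm, toDual_symm_apply] at h₆

/-- If the restriction of the twist form
`B(u,w) = D²S(x,y)[(u,0),(0,w)]` to `N₋ × N₊` is nondegenerate, then the (nonzero)
initial and final velocities of the corresponding collision orbit are transversal to
the scatterer: `v₋ ∉ N₋` and `v₊ ∉ N₊`. -/
theorem stmt6 (n : ℕ) (hn : 1 ≤ n)
    (U : Set (EuclideanSpace ℝ (Fin n) × EuclideanSpace ℝ (Fin n))) (hU : IsOpen U)
    (S : EuclideanSpace ℝ (Fin n) × EuclideanSpace ℝ (Fin n) → ℝ)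
    (hS : ContDiffOn ℝ 2 S U)
    (h : EuclideanSpace ℝ (Fin n) × EuclideanSpace ℝ (Fin n) → ℝ)
    (hh : Differentiable ℝ h) (E₀ : ℝ)
    (hHJm : ∀ x' y' : EuclideanSpace ℝ (Fin n), (x', y') ∈ U →
      h (x', -gradient (fun x'' => S (x'', y')) x') = E₀)
    (hHJp : ∀ x' y' : EuclideanSpace ℝ (Fin n), (x', y') ∈ U →
      h (y', gradient (fun y'' => S (x', y'')) y') = E₀)
    (x y : EuclideanSpace ℝ (Fin n)) (hxy : (x, y) ∈ U)
    (Nm Np : Submodule ℝ (EuclideanSpace ℝ (Fin n)))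
    -- nondegeneracy of the restriction of the twist form `B` to `N₋ × N₊`
    (hnondeg₁ : ∀ u ∈ Nm, u ≠ 0 → ∃ w ∈ Np,
      fderiv ℝ (fderiv ℝ S) (x, y) (u, 0) (0, w) ≠ 0)
    (hnondeg₂ : ∀ w ∈ Np, w ≠ 0 → ∃ u ∈ Nm,
      fderiv ℝ (fderiv ℝ S) (x, y) (u, 0) (0, w) ≠ 0) :
    (gradient (fun p => h (x, p)) (-gradient (fun x' => S (x', y)) x) ≠ 0 →
      gradient (fun p => h (x, p)) (-gradient (fun x' => S (x', y)) x) ∉ Nm) ∧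
    (gradient (fun p => h (y, p)) (gradient (fun y' => S (x, y')) y) ≠ 0 →
      gradient (fun p => h (y, p)) (gradient (fun y' => S (x, y')) y) ∉ Np) := by
  have hSat : ∀ z ∈ U, ContDiffAt ℝ 2 S z := fun z hz => hS.contDiffAt (hU.mem_nhds hz)
  have hdiff : ∀ z ∈ U, DifferentiableAt ℝ S z := fun z hz =>
    (hSat z hz).differentiableAt (by norm_num)
  have hD : DifferentiableAt ℝ (fderiv ℝ S) (x, y) :=
    ((hSat _ hxy).fderiv_right (m := 1) (by norm_num)).differentiableAt (by norm_num)
  have hsymm : IsSymmSndFDerivAt ℝ S (x, y) := (hSat _ hxy).isSymmSndFDerivAt (by simp)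
  have hpx : ∀ x' y', (x', y') ∈ U →
      (toDual ℝ _).symm ((fderiv ℝ S (x', y')).comp (-ContinuousLinearMap.inl ℝ _ _)) =
        -gradient (fun x'' => S (x'', y')) x' := by
    intro x' y' hz
    have h₁ : HasFDerivAt (fun x'' => S (x'', y')) _ x' :=
      (hdiff _ hz).hasFDerivAt.comp x' (hasFDerivAt_prodMk_left x' y')
    rw [gradient, h₁.fderiv, ContinuousLinearMap.comp_neg, map_neg]
  have hpy : ∀ x' y', (x', y') ∈ U →
      (toDual ℝ _).symm ((fderiv ℝ S (x', y')).comp (ContinuousLinearMap.inr ℝ _ _)) =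
        gradient (fun y'' => S (x', y'')) y' := by
    intro x' y' hz
    have h₁ : HasFDerivAt (fun y'' => S (x', y'')) _ y' :=
      (hdiff _ hz).hasFDerivAt.comp y' (hasFDerivAt_prodMk_right x' y')
    rw [gradient, h₁.fderiv]
  constructor
  · intro hv hmem
    obtain ⟨w, -, hw⟩ := hnondeg₁ _ hmem hv
    apply hw
    have hev : ∀ᶠ y' in 𝓝 y, (x, y') ∈ U :=
      (Continuous.prodMk_right x).continuousAt.eventually (hU.mem_nhds hxy)
    have key := hessian_apply_gradient_eq_zero (S := S) (φ := fun p => h (x, p))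
      (c := fun y' => (x, y')) (E₀ := E₀) (hpx x y hxy) hD (hasFDerivAt_prodMk_right x y)
      (by fun_prop) (hev.mono fun y' hy' => by rw [hpx x y' hy']; exact hHJm x y' hy') w
    rw [hsymm.eq]
    simpa only [neg_apply, map_neg, neg_eq_zero,
      ContinuousLinearMap.inl_apply, ContinuousLinearMap.inr_apply] using key
  · intro hv hmem
    obtain ⟨u, -, hu⟩ := hnondeg₂ _ hmem hv
    apply hu
    have hev : ∀ᶠ x' in 𝓝 x, (x', y) ∈ U :=
      (Continuous.prodMk_left y).continuousAt.eventually (hU.mem_nhds hxy)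
    exact hessian_apply_gradient_eq_zero (S := S) (φ := fun p => h (y, p))
      (c := fun x' => (x', y)) (E₀ := E₀) (hpy x y hxy) hD (hasFDerivAt_prodMk_left x y)
      (by fun_prop) (hev.mono fun x' hx' => by rw [hpy x' y hx']; exact hHJp x' y hx') u
end

section
/- Let n ≥ 1, let U ⊆ ℝⁿ × ℝⁿ be open and let L : ℝⁿ × ℝⁿ → ℝ be differentiable on U. Let Φ : ℝ → ℝⁿ → ℝⁿ be a family of maps with Φ 0 = id, and let (x,y) ∈ U. Assume: θ ↦ Φ θ x and θ ↦ Φ θ y are differentiable at θ = 0 with derivatives u_x and u_y respectively, and there is a neighborhood of 0 in ℝ on which (Φ θ x, Φ θ y) ∈ U and L(Φ θ x, Φ θ y) = L(x, y). Then ⟨u_x, ∇_x L(x,y)⟩ + ⟨u_y, ∇_y L(x,y)⟩ = 0; equivalently, the Noether pairing of the outgoing momentum at x equals that of the incoming momentum at y: ⟨u_x, −∇_x L(x,y)⟩ = ⟨u_y, ∇_y L(x,y)⟩. Consequently, along any trajectory (x_j) of the discrete Lagrangian system with invariant Lagrangians, the Noether integral G_j = ⟨u(x_j), −∇₁L(x_j,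 x_{j+1})⟩ is independent of j. -/
open scoped RealInnerProductSpace

/-!
Differentiating `L (Φ θ x, Φ θ y) = L (x, y)` at `θ = 0` with the chain rule gives
`⟨u_x, ∇₁L⟩ + ⟨u_y, ∇₂L⟩ = 0` (`inner_gradient_add_eq_zero`): the derivative `DL (u_x, u_y)` splits
as `DL (u_x, 0) + DL (0, u_y)`, and the two summands are the pairings with the partial gradients.
Along a trajectory this identity says that the pairing of `u` with the outgoing momentum at `x_j`
equals its pairing with the incoming momentum at `x_{j+1}`, which by the trajectory condition is the
outgoing momentum there. So `G_j = G_{j+1}` for all `j : ℤ`, and `G` is constant.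
-/

/-- Infinitesimal invariance: a function that is constant along a curve `(c, d)` pairs to zero with
the velocity of the curve, expressed through the partial gradients. -/
theorem inner_gradient_add_eq_zero {E F : Type*}
    [NormedAddCommGroup E] [InnerProductSpace ℝ E] [CompleteSpace E]
    [NormedAddCommGroup F] [InnerProductSpace ℝ F] [CompleteSpace F]
    {L : E × F → ℝ} {x : E} {y : F} (hL : DifferentiableAt ℝ L (x, y))
    {c : ℝ → E} {d : ℝ → F} (hc0 : c 0 = x) (hd0 : d 0 = y) {ux : E} {uy : F}
    (hc : HasDerivAt c ux 0) (hd : HasDerivAt d uy 0)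
    (hinv : ∀ᶠ θ : ℝ in nhds 0, L (c θ, d θ) = L (x, y)) :
    ⟪ux, gradient (fun x' => L (x', y)) x⟫ + ⟪uy, gradient (fun y' => L (x, y')) y⟫ = 0 := by
  have h1 : HasFDerivAt (fun x' => L (x', y)) _ x :=
    hL.hasFDerivAt.comp x (hasFDerivAt_prodMk_left x y)
  have h2 : HasFDerivAt (fun y' => L (x, y')) _ y :=
    hL.hasFDerivAt.comp y (hasFDerivAt_prodMk_right x y)
  have hcurve : HasDerivAt (fun θ => L (c θ, d θ)) (fderiv ℝ L (x, y) (ux, uy)) 0 :=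
    HasFDerivAt.comp_hasDerivAt_of_eq (f := fun θ => (c θ, d θ)) 0 hL.hasFDerivAt
      (hc.prodMk hd) (by rw [hc0, hd0])
  have hzero : fderiv ℝ L (x, y) (ux, uy) = 0 :=
    hcurve.unique ((hasDerivAt_const 0 (L (x, y))).congr_of_eventuallyEq hinv)
  rw [real_inner_comm, real_inner_comm _ uy, gradient, gradient,
    InnerProductSpace.toDual_symm_apply, InnerProductSpace.toDual_symm_apply, h1.fderiv, h2.fderiv]
  simpa [← map_add] using hzero

/-- discrete Noether. If the discrete Lagrangian `L` is invariant
under a one-parameter family `Φ θ` near `θ = 0`, with generators `u_x` at `x` and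
`u_y` at `y`, then `⟨u_x, ∇_x L⟩ + ⟨u_y, ∇_y L⟩ = 0`, i.e. the Noether pairing of the
outgoing momentum at `x` equals that of the incoming momentum at `y`.  Consequently,
along any trajectory of a discrete Lagrangian system with invariant Lagrangians,
the Noether integral `G_j = ⟨u(x_j), −∇₁L_j(x_j, x_{j+1})⟩` is independent of `j`. -/
theorem stmt7 (n : ℕ) (hn : 1 ≤ n)
    (U : Set (EuclideanSpace ℝ (Fin n) × EuclideanSpace ℝ (Fin n))) (hU : IsOpen U)
    (L : EuclideanSpace ℝ (Fin n) × EuclideanSpace ℝ (Fin n) → ℝ)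
    (hL : DifferentiableOn ℝ L U)
    (Φ : ℝ → EuclideanSpace ℝ (Fin n) → EuclideanSpace ℝ (Fin n))
    (hΦ0 : Φ 0 = id)
    (x y : EuclideanSpace ℝ (Fin n)) (hxy : (x, y) ∈ U)
    (ux uy : EuclideanSpace ℝ (Fin n))
    (hux : HasDerivAt (fun θ : ℝ => Φ θ x) ux 0)
    (huy : HasDerivAt (fun θ : ℝ => Φ θ y) uy 0)
    (hinv : ∀ᶠ θ : ℝ in nhds 0, (Φ θ x, Φ θ y) ∈ U ∧ L (Φ θ x, Φ θ y) = L (x, y)) :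
    (⟪ux, gradient (fun x' => L (x', y)) x⟫ + ⟪uy, gradient (fun y' => L (x, y')) y⟫ = 0) ∧
    (⟪ux, -gradient (fun x' => L (x', y)) x⟫ = ⟪uy, gradient (fun y' => L (x, y')) y⟫) ∧
    -- consequently: along a trajectory of a DLS with invariant Lagrangians the
    -- Noether integral is independent of `j`
    (∀ (Lseq : ℤ → EuclideanSpace ℝ (Fin n) × EuclideanSpace ℝ (Fin n) → ℝ)
       (xs : ℤ → EuclideanSpace ℝ (Fin n))
       (u : EuclideanSpace ℝ (Fin n) → EuclideanSpace ℝ (Fin n)),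
      (∀ j : ℤ, DifferentiableAt ℝ (Lseq j) (xs j, xs (j + 1))) →
      (∀ j : ℤ, HasDerivAt (fun θ : ℝ => Φ θ (xs j)) (u (xs j)) 0) →
      (∀ j : ℤ, ∀ᶠ θ : ℝ in nhds 0,
        Lseq j (Φ θ (xs j), Φ θ (xs (j + 1))) = Lseq j (xs j, xs (j + 1))) →
      -- the trajectory condition: the incoming momentum at `x_{j+1}` coincides with the
      -- outgoing momentum there, `y_{j+1} = ∇₂L_j(x_j, x_{j+1}) = −∇₁L_{j+1}(x_{j+1}, x_{j+2})`
      (∀ j : ℤ, gradient (fun y' => Lseq j (xs j, y')) (xs (j + 1))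
          = -gradient (fun x' => Lseq (j + 1) (x', xs (j + 2))) (xs (j + 1))) →
      ∀ j : ℤ, ⟪u (xs j), -gradient (fun x' => Lseq j (x', xs (j + 1))) (xs j)⟫
          = ⟪u (xs 0), -gradient (fun x' => Lseq 0 (x', xs 1)) (xs 0)⟫) := by
  have key := inner_gradient_add_eq_zero (hL.differentiableAt (hU.mem_nhds hxy))
    (by simp [hΦ0]) (by simp [hΦ0]) hux huy (hinv.mono fun _ h => h.2)
  refine ⟨key, ?_, ?_⟩
  · rw [inner_neg_right]
    linarith
  · intro Lseq xs u hd hu hi htraj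
    have step (j : ℤ) :
        ⟪u (xs (j + 1)), -gradient (fun x' => Lseq (j + 1) (x', xs (j + 1 + 1))) (xs (j + 1))⟫
          = ⟪u (xs j), -gradient (fun x' => Lseq j (x', xs (j + 1))) (xs j)⟫ := by
      have h := inner_gradient_add_eq_zero (hd j) (by simp [hΦ0]) (by simp [hΦ0])
        (hu j) (hu (j + 1)) (hi j)
      rw [show j + 1 + 1 = j + 2 by ring, ← htraj j, inner_neg_right]
      linarith
    intro j
    induction j with
    | zero => rw [zero_add]
    | succ i ih => exact (step i).trans ih
    | pred i ih =>
      have h := step (-(i : ℤ) - 1)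
      rw [sub_add_cancel] at h
      rw [sub_add_cancel]
      exact h.symm.trans ih
end

section
/- Let n ≥ 1, let f : ℝⁿ → ℝ be twice continuously differentiable, let u : ℝⁿ → ℝⁿ be a differentiable vector field, and let Φ : ℝ → ℝⁿ → ℝⁿ be its flow: Φ 0 x = x and for every x the curve θ ↦ Φ θ x is differentiable with derivative u(Φ θ x). Assume f is invariant: f(Φ θ x) = f(x) for all θ ∈ ℝ and x ∈ ℝⁿ. If x₀ is a critical point of f (∇f(x₀) = 0), then u(x₀) lies in the kernel of the Hessian of f at x₀: D²f(x₀)[u(x₀), v] = 0 for every v ∈ ℝⁿ. In particular, if u(x₀) ≠ 0 the Hessian of f at x₀ is degenerate. -/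
/-! Differentiating `f (Φ θ x) = f x` at `θ = 0` gives the identity `Df(x)[u x] = 0` for every `x`.
Differentiating that identity in `x` at `x₀` in the direction `v` gives
`D²f(x₀)[v, u x₀] + Df(x₀)[Du(x₀) v] = 0`; the second term vanishes because `x₀` is critical, and
symmetry of the second derivative of a `C²` function concludes. -/

/-- If `f` is invariant under the flow `Φ` of the vector field `u`
and `x₀` is a critical point of `f`, then `u(x₀)` lies in the kernel of the Hessian
`D²f(x₀)`; in particular, if `u(x₀) ≠ 0` the Hessian of `f` at `x₀` is degenerate. -/
theorem stmt8 (n : ℕ) (hn : 1 ≤ n)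
    (f : EuclideanSpace ℝ (Fin n) → ℝ) (hf : ContDiff ℝ 2 f)
    (u : EuclideanSpace ℝ (Fin n) → EuclideanSpace ℝ (Fin n))
    (hu : Differentiable ℝ u)
    (Φ : ℝ → EuclideanSpace ℝ (Fin n) → EuclideanSpace ℝ (Fin n))
    (hΦ0 : ∀ x, Φ 0 x = x)
    (hflow : ∀ (x : EuclideanSpace ℝ (Fin n)) (θ : ℝ),
      HasDerivAt (fun t : ℝ => Φ t x) (u (Φ θ x)) θ)
    (hinv : ∀ (θ : ℝ) (x : EuclideanSpace ℝ (Fin n)), f (Φ θ x) = f x)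
    (x₀ : EuclideanSpace ℝ (Fin n)) (hcrit : gradient f x₀ = 0) :
    (∀ v : EuclideanSpace ℝ (Fin n), fderiv ℝ (fderiv ℝ f) x₀ (u x₀) v = 0) ∧
    (u x₀ ≠ 0 → ∃ w : EuclideanSpace ℝ (Fin n), w ≠ 0 ∧
      ∀ v : EuclideanSpace ℝ (Fin n), fderiv ℝ (fderiv ℝ f) x₀ w v = 0) := by
  have hdf : Differentiable ℝ f := hf.differentiable (by norm_num)
  have hddf : Differentiable ℝ (fderiv ℝ f) :=
    (hf.fderiv_right (m := 1) (by norm_num)).differentiable (by norm_num)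
  have hcrit' : fderiv ℝ f x₀ = 0 := by
    simpa [gradient] using hcrit
  have hzero : ∀ x, fderiv ℝ f x (u x) = 0 := by
    intro x
    have h1 : HasDerivAt (fun t : ℝ => Φ t x) (u x) 0 := by
      simpa only [hΦ0] using hflow x 0
    have h2 : HasDerivAt (fun t : ℝ => f (Φ t x)) (fderiv ℝ f x (u x)) 0 :=
      (hdf x).hasFDerivAt.comp_hasDerivAt_of_eq 0 h1 (hΦ0 x).symm
    simp only [hinv] at h2
    exact h2.unique (hasDerivAt_const 0 (f x))
  have key : ∀ v, fderiv ℝ (fderiv ℝ f) x₀ (u x₀) v = 0 := by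
    intro v
    have hsymm : IsSymmSndFDerivAt ℝ f x₀ :=
      hf.contDiffAt.isSymmSndFDerivAt (by simp)
    have h1 := (hddf x₀).hasFDerivAt.clm_apply (hu x₀).hasFDerivAt
    simp only [hzero] at h1
    have h2 := DFunLike.congr_fun (h1.unique (hasFDerivAt_const 0 x₀)) v
    rw [hsymm.eq]
    simpa [hcrit'] using h2
  exact ⟨key, fun h => ⟨u x₀, h, key⟩⟩
end

section
/- Let X be a real Banach space, x₀ ∈ X, r > 0, c > 0, δ ≥ 0, L ≥ 0 with 2·c·δ ≤ r and 2·c·L·r ≤ 1. Let Φ : X → X be differentiable at every point of the closed ball B̄(x₀, r), with derivative Lipschitz there: ‖DΦ(x) − DΦ(y)‖ ≤ L·‖x − y‖ for x, y ∈ B̄(x₀, r). Assume ‖Φ(x₀)‖ ≤ δ and that A := DΦ(x₀) is invertible as a continuous linear equivalence with ‖A⁻¹‖ ≤ c. Then there exists a unique x* ∈ B̄(x₀, 2cδ) with Φ(x*) = 0; moreover DΦ(x*) is invertible as a continuous linear equivalence with ‖(DΦ(x*))⁻¹‖ ≤ 2c. -/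
/-!
The zero is found by the simplified Newton iteration `T x = x - A⁻¹ (Φ x)`, whose linear part is
frozen at `A = DΦ(x₀)`. On `B̄(x₀, r)` the Lipschitz bound gives `‖DΦ(x) - A‖ ≤ L r`, and
`c L r ≤ 1/2`, so by the mean value inequality `T` is `1/2`-Lipschitz there. Since
`‖T x₀ - x₀‖ ≤ c δ`, the ball `B̄(x₀, 2cδ)` is mapped into itself, and the contraction principle
gives existence and uniqueness. The same bound `‖DΦ(x) - A‖ ≤ L r` makes `DΦ(x)` a small
perturbation of `A`, invertible by a Neumann series (`exists_equiv_of_norm_sub_le`).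
-/

/-- An operator `D` with `c ‖A - D‖ ≤ 1/2`, where `c` bounds `‖A⁻¹‖`, is invertible with inverse of
norm at most `2c`. -/
lemma exists_equiv_of_norm_sub_le {X : Type*} [NormedAddCommGroup X] [NormedSpace ℝ X]
    [CompleteSpace X] (A : X ≃L[ℝ] X) (D : X →L[ℝ] X) (c K : ℝ) (hc : 0 < c)
    (hcK : c * K ≤ 1 / 2) (hAinv : ‖(A.symm : X →L[ℝ] X)‖ ≤ c)
    (hD : ‖D - (A : X →L[ℝ] X)‖ ≤ K) :
    ∃ B : X ≃L[ℝ] X, (B : X →L[ℝ] X) = D ∧ ‖(B.symm : X →L[ℝ] X)‖ ≤ 2 * c := by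
  -- `A⁻¹ D = 1 - t` with `‖t‖ ≤ 1/2`
  set t : X →L[ℝ] X := (A.symm : X →L[ℝ] X).comp ((A : X →L[ℝ] X) - D) with ht
  have ht2 : ‖t‖ ≤ 1 / 2 := by
    refine (ContinuousLinearMap.opNorm_comp_le _ _).trans (le_trans ?_ hcK)
    rw [norm_sub_rev]
    exact mul_le_mul hAinv hD (norm_nonneg _) hc.le
  have ht1 : ‖t‖ < 1 := by linarith
  let B : X ≃L[ℝ] X := (ContinuousLinearEquiv.ofUnit (Units.oneSub t ht1)).trans A
  have hB : ∀ v, B v = D v := by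
    intro v
    change A (v - t v) = D v
    simp [ht]
  refine ⟨B, ContinuousLinearMap.ext hB, ?_⟩
  refine ContinuousLinearMap.opNorm_le_bound _ (by positivity) fun w => ?_
  obtain ⟨v, rfl⟩ := B.surjective w
  have h1 : v = A.symm (D v) + t v := by simp [ht]
  have h2 : ‖A.symm (D v)‖ ≤ c * ‖D v‖ :=
    (A.symm : X →L[ℝ] X).le_of_opNorm_le hAinv (D v)
  have h3 : ‖t v‖ ≤ 1 / 2 * ‖v‖ := t.le_of_opNorm_le ht2 v
  have h4 : ‖v‖ ≤ ‖A.symm (D v)‖ + ‖t v‖ := by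
    conv_lhs => rw [h1]
    exact norm_add_le _ _
  rw [ContinuousLinearEquiv.coe_coe, ContinuousLinearEquiv.symm_apply_apply, hB]
  linarith

/-- quantitative Newton–Kantorovich lemma, the key analytic step of
the anti-integrable limit method. If `‖Φ(x₀)‖ ≤ δ`, `DΦ(x₀)` is invertible with
`‖DΦ(x₀)⁻¹‖ ≤ c`, `DΦ` is `L`-Lipschitz on `B̄(x₀, r)`, and `2cδ ≤ r`, `2cLr ≤ 1`,
then `Φ` has a unique zero `x*` in `B̄(x₀, 2cδ)`, and `DΦ(x*)` is invertible with
`‖DΦ(x*)⁻¹‖ ≤ 2c`. -/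
theorem stmt12 {X : Type*} [NormedAddCommGroup X] [NormedSpace ℝ X] [CompleteSpace X]
    (x₀ : X) (r c δ L : ℝ) (hr : 0 < r) (hc : 0 < c) (hδ : 0 ≤ δ) (hL : 0 ≤ L)
    (hcδ : 2 * c * δ ≤ r) (hcLr : 2 * c * L * r ≤ 1)
    (Φ : X → X)
    (hdiff : ∀ x ∈ Metric.closedBall x₀ r, DifferentiableAt ℝ Φ x)
    (hlip : ∀ x ∈ Metric.closedBall x₀ r, ∀ y ∈ Metric.closedBall x₀ r,
      ‖fderiv ℝ Φ x - fderiv ℝ Φ y‖ ≤ L * ‖x - y‖)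
    (hΦx₀ : ‖Φ x₀‖ ≤ δ)
    (A : X ≃L[ℝ] X) (hA : (A : X →L[ℝ] X) = fderiv ℝ Φ x₀)
    (hAinv : ‖(A.symm : X →L[ℝ] X)‖ ≤ c) :
    ∃ x : X, (x ∈ Metric.closedBall x₀ (2 * c * δ) ∧ Φ x = 0) ∧
      (∀ y ∈ Metric.closedBall x₀ (2 * c * δ), Φ y = 0 → y = x) ∧
      ∃ B : X ≃L[ℝ] X, (B : X →L[ℝ] X) = fderiv ℝ Φ x ∧
        ‖(B.symm : X →L[ℝ] X)‖ ≤ 2 * c := by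
  have hcK : c * (L * r) ≤ 1 / 2 := by linarith
  have hnear : ∀ x ∈ Metric.closedBall x₀ r, ‖fderiv ℝ Φ x - (A : X →L[ℝ] X)‖ ≤ L * r := by
    intro x hx
    rw [hA]
    refine (hlip x hx x₀ (Metric.mem_closedBall_self hr.le)).trans ?_
    rw [mem_closedBall_iff_norm] at hx
    gcongr
  have hsub : Metric.closedBall x₀ (2 * c * δ) ⊆ Metric.closedBall x₀ r :=
    Metric.closedBall_subset_closedBall hcδ
  have hx₀ : x₀ ∈ Metric.closedBall x₀ (2 * c * δ) :=
    Metric.mem_closedBall_self (by positivity)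
  let T : X → X := fun x => x - A.symm (Φ x)
  have hT : ∀ x ∈ Metric.closedBall x₀ r, ∀ y ∈ Metric.closedBall x₀ r,
      ‖T x - T y‖ ≤ 1 / 2 * ‖x - y‖ := by
    intro x hx y hy
    have h1 := (convex_closedBall x₀ r).norm_image_sub_le_of_norm_fderiv_le' hdiff hnear hy hx
    have h2 : T x - T y = -A.symm (Φ x - Φ y - A (x - y)) := by
      simp only [T, map_sub, ContinuousLinearEquiv.symm_apply_apply]
      abel
    rw [h2, norm_neg]
    calc ‖A.symm (Φ x - Φ y - A (x - y))‖ ≤ c * ‖Φ x - Φ y - A (x - y)‖ :=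
          (A.symm : X →L[ℝ] X).le_of_opNorm_le hAinv _
      _ ≤ c * (L * r * ‖x - y‖) := by gcongr; exact h1
      _ = c * (L * r) * ‖x - y‖ := by ring
      _ ≤ 1 / 2 * ‖x - y‖ := by gcongr
  have hmaps : Set.MapsTo T (Metric.closedBall x₀ (2 * c * δ))
      (Metric.closedBall x₀ (2 * c * δ)) := by
    intro x hx
    have h1 := hT x (hsub hx) x₀ (hsub hx₀)
    have h2 : ‖A.symm (Φ x₀)‖ ≤ c * δ :=
      ((A.symm : X →L[ℝ] X).le_of_opNorm_le hAinv _).trans (by gcongr)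
    rw [mem_closedBall_iff_norm] at hx ⊢
    have h3 : T x - x₀ = (T x - T x₀) - A.symm (Φ x₀) := by simp only [T]; abel
    rw [h3]
    linarith [norm_sub_le (T x - T x₀) (A.symm (Φ x₀))]
  have hcontr : ContractingWith (1 / 2) (hmaps.restrict T _ _) := by
    refine ⟨by norm_num, LipschitzWith.of_dist_le_mul fun x y => ?_⟩
    have := hT x (hsub x.2) y (hsub y.2)
    simpa [Subtype.dist_eq, dist_eq_norm] using this
  obtain ⟨x, hx, hfix, -⟩ := hcontr.exists_fixedPoint' Metric.isClosed_closedBall.isComplete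
    hmaps hx₀ (edist_ne_top _ _)
  have hzero : Φ x = 0 := by
    have h : x - A.symm (Φ x) = x := hfix
    simpa using h
  refine ⟨x, ⟨hx, hzero⟩, fun y hy hy0 => ?_,
    exists_equiv_of_norm_sub_le A _ c (L * r) hc hcK hAinv (hnear x (hsub hx))⟩
  have h := hT y (hsub hy) x (hsub hx)
  simp only [T, hy0, hzero, map_zero, sub_zero] at h
  exact sub_eq_zero.mp (norm_le_zero_iff.mp (by linarith))
end

section
/- Let X and Y be real Banach spaces. Let F : X → X be continuously differentiable on a neighborhood of x₀, and let H : X × Y → Y, R : X × Y × ℝ → X and S : X × Y × ℝ → Y be continuously differentiable on a neighborhood of (x₀, s₀, 0). Assume F(x₀) = 0, H(x₀, s₀) = 0, that DF(x₀) : X → X is invertible as a continuous linear equivalence, and that the partial derivative of H in the second variable at (x₀, s₀), D_s H(x₀, s₀) : Y → Y, is invertible as a continuous linear equivalence. Then there exist ε₀ > 0 and K > 0 such that for every ε ∈ (0, ε₀) there exist x ∈ X and s ∈ Y with F(x) + ε·R(x, s, ε) = 0, H(x, s) + ε·S(x, s, ε) = 0, and ‖x − x₀‖ + ‖s − s₀‖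 ≤ K·ε. -/
/-!
The system is the zero set of the single `C¹` map
`G (ε, (x, s)) = (F x + ε R(x,s,ε), H (x,s) + ε S(x,s,ε))` near `(0, (x₀, s₀))`. At `ε = 0` the
remainders drop out, so the partial derivative of `G` in `(x, s)` is the derivative of
`(x, s) ↦ (F x, H (x, s))`, which is block triangular with the invertible diagonal blocks
`DF(x₀)` and `D_s H(x₀, s₀)`, hence invertible. The implicit function theorem gives a solution
branch `ε ↦ (x, s)` through `(x₀, s₀)`; its differentiability at `0` gives the `O(ε)` bound.
-/

open Filter Topology

/-- The derivative of `(x, s) ↦ (F x, H (x, s))` is block triangular, hence invertible as soon as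
`DF(x₀)` and `D_s H(x₀, s₀)` are. -/
lemma exists_equiv_hasFDerivAt_triangular {X Y : Type*}
    [NormedAddCommGroup X] [NormedSpace ℝ X] [NormedAddCommGroup Y] [NormedSpace ℝ Y]
    {F : X → X} {H : X × Y → Y} {x₀ : X} {s₀ : Y}
    (hF : DifferentiableAt ℝ F x₀) (hH : DifferentiableAt ℝ H (x₀, s₀))
    (hDF : ∃ A : X ≃L[ℝ] X, (A : X →L[ℝ] X) = fderiv ℝ F x₀)
    (hDsH : ∃ B : Y ≃L[ℝ] Y, (B : Y →L[ℝ] Y) = fderiv ℝ (fun s : Y => H (x₀, s)) s₀) :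
    ∃ T : (X × Y) ≃L[ℝ] (X × Y),
      HasFDerivAt (fun p : X × Y => (F p.1, H p)) (T : X × Y →L[ℝ] X × Y) (x₀, s₀) := by
  obtain ⟨A, hA⟩ := hDF
  obtain ⟨B, hB⟩ := hDsH
  have hB' : (B : Y →L[ℝ] Y) = fderiv ℝ H (x₀, s₀) ∘L .inr ℝ X Y := by
    rw [hB]
    exact (hH.hasFDerivAt.comp s₀ (hasFDerivAt_prodMk_right x₀ s₀)).fderiv
  refine ⟨A.skewProd B (fderiv ℝ H (x₀, s₀) ∘L .inl ℝ X Y), ?_⟩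
  have hF1 : HasFDerivAt (fun p : X × Y => F p.1)
      (fderiv ℝ F x₀ ∘L .fst ℝ X Y) (x₀, s₀) :=
    HasFDerivAt.comp (g := F) (x₀, s₀) hF.hasFDerivAt hasFDerivAt_fst
  refine (hF1.prodMk hH.hasFDerivAt).congr_fderiv (ContinuousLinearMap.ext fun v => ?_)
  have hA1 : A v.1 = fderiv ℝ F x₀ v.1 := congrArg (fun L : X →L[ℝ] X => L v.1) hA
  have hB1 : B v.2 = fderiv ℝ H (x₀, s₀) (0, v.2) := congrArg (fun L : Y →L[ℝ] Y => L v.2) hB'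
  refine Prod.ext ?_ ?_
  · simp [hA1]
  · simp [hB1, ← map_add]


/-- two-scale perturbation lemma from the proof of the shadowing
theorem for billiards with thin scatterers. If `F(x₀) = 0` with `DF(x₀)` invertible
and `H(x₀, s₀) = 0` with `D_s H(x₀, s₀)` invertible, then for all small `ε > 0` the
perturbed system `F(x) + εR(x,s,ε) = 0`, `H(x,s) + εS(x,s,ε) = 0` has a solution
at distance `O(ε)` from `(x₀, s₀)`. -/
theorem stmt13 {X Y : Type*}
    [NormedAddCommGroup X] [NormedSpace ℝ X] [CompleteSpace X]
    [NormedAddCommGroup Y] [NormedSpace ℝ Y] [CompleteSpace Y]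
    (F : X → X) (H : X × Y → Y) (R : X × Y × ℝ → X) (S : X × Y × ℝ → Y)
    (x₀ : X) (s₀ : Y)
    (hF : ContDiffAt ℝ 1 F x₀)
    (hH : ContDiffAt ℝ 1 H (x₀, s₀))
    (hR : ContDiffAt ℝ 1 R (x₀, s₀, 0))
    (hS : ContDiffAt ℝ 1 S (x₀, s₀, 0))
    (hF0 : F x₀ = 0) (hH0 : H (x₀, s₀) = 0)
    (hDF : ∃ A : X ≃L[ℝ] X, (A : X →L[ℝ] X) = fderiv ℝ F x₀)
    (hDsH : ∃ B : Y ≃L[ℝ] Y, (B : Y →L[ℝ] Y) = fderiv ℝ (fun s : Y => H (x₀, s)) s₀) :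
    ∃ ε₀ : ℝ, 0 < ε₀ ∧ ∃ K : ℝ, 0 < K ∧ ∀ ε : ℝ, 0 < ε → ε < ε₀ →
      ∃ (x : X) (s : Y),
        F x + ε • R (x, s, ε) = 0 ∧
        H (x, s) + ε • S (x, s, ε) = 0 ∧
        ‖x - x₀‖ + ‖s - s₀‖ ≤ K * ε := by
  obtain ⟨T, hT⟩ := exists_equiv_hasFDerivAt_triangular (hF.differentiableAt one_ne_zero)
    (hH.differentiableAt one_ne_zero) hDF hDsH
  let G : ℝ × (X × Y) → X × Y := fun q =>
    (F q.2.1 + q.1 • R (q.2.1, q.2.2, q.1), H q.2 + q.1 • S (q.2.1, q.2.2, q.1))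
  let u : ℝ × (X × Y) := (0, (x₀, s₀))
  have hG : ContDiffAt ℝ 1 G u := by
    have hr : ContDiffAt ℝ 1 (fun q : ℝ × (X × Y) => (q.2.1, q.2.2, q.1)) u := by fun_prop
    have hx : ContDiffAt ℝ 1 (fun q : ℝ × (X × Y) => q.2.1) u := by fun_prop
    have hF' : ContDiffAt ℝ 1 (fun q : ℝ × (X × Y) => F q.2.1) u :=
      ContDiffAt.comp (g := F) u hF hx
    have hH' : ContDiffAt ℝ 1 (fun q : ℝ × (X × Y) => H q.2) u :=
      ContDiffAt.comp (g := H) u hH contDiffAt_snd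
    have hR' : ContDiffAt ℝ 1 (fun q : ℝ × (X × Y) => R (q.2.1, q.2.2, q.1)) u :=
      ContDiffAt.comp (g := R) u hR hr
    have hS' : ContDiffAt ℝ 1 (fun q : ℝ × (X × Y) => S (q.2.1, q.2.2, q.1)) u :=
      ContDiffAt.comp (g := S) u hS hr
    exact (hF'.add (contDiffAt_fst.smul hR')).prodMk (hH'.add (contDiffAt_fst.smul hS'))
  have hGu : G u = 0 := by simp [G, u, hF0, hH0]
  have hinv : (fderiv ℝ G u ∘L .inr ℝ ℝ (X × Y)).IsInvertible := by
    refine ⟨T, ?_⟩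
    -- On the slice `ε = 0` the map `G` reduces to `(F, H)`.
    have hslice : (fun p : X × Y => G (0, p)) = fun p => (F p.1, H p) := by
      funext p
      simp [G]
    have hd : HasFDerivAt (fun p : X × Y => G (0, p))
        (fderiv ℝ G u ∘L .inr ℝ ℝ (X × Y)) (x₀, s₀) :=
      HasFDerivAt.comp (g := G) (x₀, s₀) (hG.differentiableAt one_ne_zero).hasFDerivAt
        (hasFDerivAt_prodMk_right (0 : ℝ) (x₀, s₀))
    rw [hslice] at hd
    exact hT.unique hd
  set ψ := hG.implicitFunction one_ne_zero hinv with hψ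
  have hψ0 : ψ 0 = (x₀, s₀) := hG.implicitFunction_apply_self one_ne_zero hinv
  have hsol : ∀ᶠ ε in 𝓝 (0 : ℝ), G (ε, ψ ε) = G u :=
    hG.eventually_apply_implicitFunction one_ne_zero hinv
  have hO : (fun ε => ψ ε - ψ 0) =O[𝓝 0] fun ε : ℝ => ε - 0 :=
    (hG.hasStrictFDerivAt_implicitFunction one_ne_zero hinv).hasFDerivAt.isBigO_sub
  obtain ⟨C, hC, hbound⟩ := hO.exists_pos
  obtain ⟨ε₀, hε₀, hball⟩ := Metric.eventually_nhds_iff.1 (hsol.and hbound.bound)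
  -- The norm on `X × Y` is the maximum, so the sum of the two norms costs a factor `2`.
  refine ⟨ε₀, hε₀, 2 * C, by positivity, fun ε hε hlt => ⟨(ψ ε).1, (ψ ε).2, ?_⟩⟩
  obtain ⟨h1, h2⟩ := hball (y := ε) (by simpa [abs_of_pos hε] using hlt)
  rw [hGu] at h1
  refine ⟨congrArg Prod.fst h1, congrArg Prod.snd h1, ?_⟩
  rw [hψ0, sub_zero, Real.norm_of_nonneg hε.le] at h2
  have hx := (norm_fst_le (ψ ε - (x₀, s₀))).trans h2
  have hs := (norm_snd_le (ψ ε - (x₀, s₀))).trans h2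
  simp only [Prod.fst_sub, Prod.snd_sub] at hx hs
  linarith
end
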